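/- Fix ε > 0 and let μ, ν be Borel probability measures on ℝ^{d_x} and ℝ^{d_y} with finite fourth moments. Then S²_ε(μ,ν) = inf_{A ∈ ℝ^{d_x×d_y}} [32‖A‖_F² + OT_{A,ε}(μ,ν)], where ‖·‖_F is the Frobenius norm. Moreover, the infimum is attained at some matrix A* all of whose entries lie in the interval [−M_{μ,ν}/2, M_{μ,ν}/2], where M_{μ,ν} = √(M₂(μ)·M₂(ν)). -/

import Mathlib

/-!
For a coupling `π`, put `m(π) i j = ∫ xᵢ yⱼ dπ` and
`a(π) = ∫ -4‖x‖²‖y‖² dπ + ε KL(π‖μ⊗ν)`. The two problems read `S² = inf_π (a(π) - 8‖m(π)‖²)` and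
`OT_A = inf_π (a(π) - 32⟨A, m(π)⟩)`, and completing the square gives
`32‖A‖² + a(π) - 32⟨A, m(π)⟩ = a(π) - 8‖m(π)‖² + 32‖A - m(π)/2‖²`.
Hence the dual objective is at least `S²` at every `A`. By Cauchy–Schwarz `m(π)/2` lies in the
compact box `[-M/2, M/2]`, so along a minimizing sequence `πₙ` for `S²` the matrices `m(πₙ)/2` have
a cluster point `A` in the box; the dual objective at `A` is at most
`a(πₙ) - 8‖m(πₙ)‖² + 32‖A - m(πₙ)/2‖²`, which tends to `S²`. Thus `A` attains the infimum, and no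
optimal coupling is needed.

The moment assumptions serve to make every integral finite and the objectives bounded below
(`coupling_estimates`); the product coupling, of zero entropy, shows that the infima are over
nonempty sets.
-/

open MeasureTheory
open scoped ENNReal NNReal BigOperators

noncomputable section

/-- The set of couplings of two measures. -/
def Couplings {E F : Type*} [MeasurableSpace E] [MeasurableSpace F]
    (μ : Measure E) (ν : Measure F) : Set (Measure (E × F)) :=
  {π | IsProbabilityMeasure π ∧ π.map Prod.fst = μ ∧ π.map Prod.snd = ν}

/-- Quadratic (2,2) GW distortion cost of a coupling. -/
def GWCost {E F : Type*} [NormedAddCommGroup E] [NormedAddCommGroup F]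
    [MeasurableSpace E] [MeasurableSpace F] (π : Measure (E × F)) : ℝ :=
  ∫ p, (‖p.1.1 - p.2.1‖ ^ 2 - ‖p.1.2 - p.2.2‖ ^ 2) ^ 2 ∂(π.prod π)

open Classical in
/-- KL divergence, with value `⊤` when it is not finite. -/
def KLD {Z : Type*} [MeasurableSpace Z] (π ρ : Measure Z) : ℝ≥0∞ :=
  if π ≪ ρ ∧ Integrable (MeasureTheory.llr π ρ) π then
    ENNReal.ofReal (∫ z, MeasureTheory.llr π ρ z ∂π) else ⊤

/-- ε-weighted entropic penalty. -/
def entTerm {Z : Type*} [MeasurableSpace Z] (ε : ℝ) (π ρ : Measure Z) : ℝ≥0∞ :=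
  ENNReal.ofReal ε * KLD π ρ

/-- Entropic (2,2) Gromov–Wasserstein cost `S_ε`. -/
def SEps {E F : Type*} [NormedAddCommGroup E] [NormedAddCommGroup F]
    [MeasurableSpace E] [MeasurableSpace F] (ε : ℝ) (μ : Measure E) (ν : Measure F) : ℝ :=
  sInf {v | ∃ π ∈ Couplings μ ν,
    entTerm ε π (μ.prod ν) ≠ ⊤ ∧ v = GWCost π + (entTerm ε π (μ.prod ν)).toReal}

/-- Squared (2,2) Gromov–Wasserstein distance `D(μ,ν)²`. -/
def GWsq {E F : Type*} [NormedAddCommGroup E] [NormedAddCommGroup F]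
    [MeasurableSpace E] [MeasurableSpace F] (μ : Measure E) (ν : Measure F) : ℝ :=
  sInf {v | ∃ π ∈ Couplings μ ν, v = GWCost π}


/-- The marginal-only part `S¹(μ,ν)` of the GW functional. -/
def S1 {E F : Type*} [NormedAddCommGroup E] [NormedAddCommGroup F]
    [MeasurableSpace E] [MeasurableSpace F] (μ : Measure E) (ν : Measure F) : ℝ :=
  (∫ p, ‖p.1 - p.2‖ ^ 4 ∂(μ.prod μ)) + (∫ p, ‖p.1 - p.2‖ ^ 4 ∂(ν.prod ν))
    - 4 * ∫ p, ‖p.1‖ ^ 2 * ‖p.2‖ ^ 2 ∂(μ.prod ν)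

/-- The coupling-dependent part of the GW functional evaluated at a coupling. -/
def S2Cost {dx dy : ℕ}
    (π : Measure (EuclideanSpace ℝ (Fin dx) × EuclideanSpace ℝ (Fin dy))) : ℝ :=
  (∫ p, -4 * (‖p.1‖ ^ 2 * ‖p.2‖ ^ 2) ∂π)
    - 8 * ∑ i : Fin dx, ∑ j : Fin dy, (∫ p, p.1 i * p.2 j ∂π) ^ 2

/-- The coupling-dependent part `S²_ε(μ,ν)` of the entropic GW functional. -/
def S2Eps {dx dy : ℕ} (ε : ℝ) (μ : Measure (EuclideanSpace ℝ (Fin dx)))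
    (ν : Measure (EuclideanSpace ℝ (Fin dy))) : ℝ :=
  sInf {v | ∃ π ∈ Couplings μ ν,
    entTerm ε π (μ.prod ν) ≠ ⊤ ∧ v = S2Cost π + (entTerm ε π (μ.prod ν)).toReal}

/-- The cost function `c_A(x,y) = −4‖x‖²‖y‖² − 32 xᵀAy`. -/
def costA {dx dy : ℕ} (A : Matrix (Fin dx) (Fin dy) ℝ)
    (x : EuclideanSpace ℝ (Fin dx)) (y : EuclideanSpace ℝ (Fin dy)) : ℝ :=
  -4 * (‖x‖ ^ 2 * ‖y‖ ^ 2) - 32 * ∑ i : Fin dx, ∑ j : Fin dy, x i * A i j * y j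

/-- The optimal transport cost with cost function `c_A`. -/
def OTA {dx dy : ℕ} (A : Matrix (Fin dx) (Fin dy) ℝ)
    (μ : Measure (EuclideanSpace ℝ (Fin dx))) (ν : Measure (EuclideanSpace ℝ (Fin dy))) : ℝ :=
  sInf {v | ∃ π ∈ Couplings μ ν, v = ∫ p, costA A p.1 p.2 ∂π}

/-- The entropic optimal transport cost with cost function `c_A` and parameter `ε`. -/
def OTAEps {dx dy : ℕ} (A : Matrix (Fin dx) (Fin dy) ℝ) (ε : ℝ)
    (μ : Measure (EuclideanSpace ℝ (Fin dx))) (ν : Measure (EuclideanSpace ℝ (Fin dy))) : ℝ :=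
  sInf {v | ∃ π ∈ Couplings μ ν, entTerm ε π (μ.prod ν) ≠ ⊤ ∧
    v = (∫ p, costA A p.1 p.2 ∂π) + (entTerm ε π (μ.prod ν)).toReal}

open Filter Topology

lemma complete_square {J : Type*} [Fintype J] (a : ℝ) (A m : J → ℝ) :
    32 * ∑ j, A j ^ 2 + (a - 32 * ∑ j, A j * m j)
      = (a - 8 * ∑ j, m j ^ 2) + 32 * ∑ j, (A j - m j / 2) ^ 2 := by
  have : ∑ j, (A j - m j / 2) ^ 2
      = ∑ j, A j ^ 2 - ∑ j, A j * m j + (1 / 4) * ∑ j, m j ^ 2 := by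
    rw [Finset.mul_sum, ← Finset.sum_sub_distrib, ← Finset.sum_add_distrib]
    exact Finset.sum_congr rfl fun j _ => by ring
  rw [this]; ring

/-- The duality for an arbitrary family of values `a` and bounded "moment vectors" `m`. -/
lemma abstract_duality {ι J : Type*} [Nonempty ι] [Fintype J] (a : ι → ℝ) (m : ι → J → ℝ)
    (C M : ℝ) (ha : ∀ i, C ≤ a i) (hm : ∀ i j, |m i j| ≤ M) :
    (∀ A : J → ℝ, (⨅ i, (a i - 8 * ∑ j, m i j ^ 2))
        ≤ 32 * ∑ j, A j ^ 2 + ⨅ i, (a i - 32 * ∑ j, A j * m i j)) ∧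
    ∃ A : J → ℝ, (∀ j, |A j| ≤ M / 2) ∧
      32 * ∑ j, A j ^ 2 + (⨅ i, (a i - 32 * ∑ j, A j * m i j))
        = ⨅ i, (a i - 8 * ∑ j, m i j ^ 2) := by
  have bS : BddBelow (Set.range fun i => a i - 8 * ∑ j, m i j ^ 2) := by
    refine ⟨C - 8 * ∑ _j : J, M ^ 2, ?_⟩
    rintro _ ⟨i, rfl⟩
    have : ∑ j, m i j ^ 2 ≤ ∑ _j : J, M ^ 2 :=
      Finset.sum_le_sum fun j _ => sq_le_sq' (abs_le.1 (hm i j)).1 (abs_le.1 (hm i j)).2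
    have := ha i
    dsimp only
    linarith
  have bO : ∀ A : J → ℝ, BddBelow (Set.range fun i => a i - 32 * ∑ j, A j * m i j) := by
    intro A
    refine ⟨C - 32 * ∑ j, |A j| * M, ?_⟩
    rintro _ ⟨i, rfl⟩
    have : ∑ j, A j * m i j ≤ ∑ j, |A j| * M := Finset.sum_le_sum fun j _ =>
      (le_abs_self _).trans (by
        rw [abs_mul]; exact mul_le_mul_of_nonneg_left (hm i j) (abs_nonneg _))
    have := ha i
    dsimp only
    linarith
  have lower : ∀ A : J → ℝ, (⨅ i, (a i - 8 * ∑ j, m i j ^ 2))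
        ≤ 32 * ∑ j, A j ^ 2 + ⨅ i, (a i - 32 * ∑ j, A j * m i j) := by
    intro A
    rw [← sub_le_iff_le_add']
    refine le_ciInf fun i => ?_
    have h1 := ciInf_le bS i
    have h2 := complete_square (a i) A (m i)
    have h3 : 0 ≤ ∑ j, (A j - m i j / 2) ^ 2 := Finset.sum_nonneg fun j _ => sq_nonneg _
    linarith
  refine ⟨lower, ?_⟩
  obtain ⟨u, -, hu, huS⟩ := exists_seq_tendsto_sInf (Set.range_nonempty _) bS
  choose i hi using huS
  have hbox : IsCompact (Set.univ.pi fun _ : J => Set.Icc (-(M / 2)) (M / 2)) :=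
    isCompact_univ_pi fun _ => isCompact_Icc
  have hmem : ∀ n, (fun j => m (i n) j / 2)
      ∈ Set.univ.pi fun _ : J => Set.Icc (-(M / 2)) (M / 2) := by
    intro n j _
    have := abs_le.1 (hm (i n) j)
    exact ⟨by linarith, by linarith⟩
  obtain ⟨A, hA, φ, hφ, hlim⟩ := hbox.tendsto_subseq hmem
  refine ⟨A, fun j => abs_le.2 (hA j trivial), le_antisymm ?_ (lower A)⟩
  have hdist : Tendsto (fun n => 32 * ∑ j, (A j - m (i (φ n)) j / 2) ^ 2) atTop (𝓝 0) := by
    have h : Tendsto (fun n => 32 * ∑ j, (A j - m (i (φ n)) j / 2) ^ 2) atTop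
        (𝓝 (32 * ∑ j, (A j - A j) ^ 2)) :=
      (tendsto_finsetSum _ fun j _ =>
        ((tendsto_const_nhds.sub (tendsto_pi_nhds.1 hlim j)).pow 2)).const_mul 32
    simpa using h
  have hval : Tendsto (fun n => u (φ n) + 32 * ∑ j, (A j - m (i (φ n)) j / 2) ^ 2) atTop
      (𝓝 (⨅ i, (a i - 8 * ∑ j, m i j ^ 2))) := by
    simpa [iInf] using (hu.comp hφ.tendsto_atTop).add hdist
  refine ge_of_tendsto' hval fun n => ?_
  have h1 := ciInf_le (bO A) (i (φ n))
  have h2 := complete_square (a (i (φ n))) A (m (i (φ n)))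
  have h3 := hi (φ n)
  dsimp only at h1 h3
  linarith

lemma entTerm_self {Z : Type*} [MeasurableSpace Z] (ε : ℝ) (π : Measure Z)
    [SigmaFinite π] : entTerm ε π π ≠ ⊤ := by
  have h : llr π π =ᵐ[π] fun _ => (0 : ℝ) := llr_self π
  have hi : Integrable (llr π π) π := (integrable_zero _ _ _).congr h.symm
  rw [entTerm, KLD, if_pos ⟨Measure.AbsolutelyContinuous.rfl, hi⟩]
  exact ENNReal.mul_ne_top ENNReal.ofReal_ne_top ENNReal.ofReal_ne_top

/-- Integrability and moment bounds that are uniform over all couplings of `μ` and `ν`. -/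
lemma coupling_estimates {dx dy : ℕ}
    {μ : Measure (EuclideanSpace ℝ (Fin dx))} {ν : Measure (EuclideanSpace ℝ (Fin dy))}
    (h4μ : Integrable (fun x => ‖x‖ ^ 4) μ) (h4ν : Integrable (fun y => ‖y‖ ^ 4) ν)
    {π : Measure (EuclideanSpace ℝ (Fin dx) × EuclideanSpace ℝ (Fin dy))}
    (hπ : π ∈ Couplings μ ν) :
    Integrable (fun p => ‖p.1‖ ^ 2 * ‖p.2‖ ^ 2) π ∧
    (∀ i j, Integrable (fun p => p.1 i * p.2 j) π) ∧
    -4 * ((∫ x, ‖x‖ ^ 4 ∂μ) + ∫ y, ‖y‖ ^ 4 ∂ν) ≤ (∫ p, -4 * (‖p.1‖ ^ 2 * ‖p.2‖ ^ 2) ∂π) ∧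
    ∀ i j, |∫ p, p.1 i * p.2 j ∂π| ≤ Real.sqrt ((∫ x, ‖x‖ ^ 2 ∂μ) * ∫ y, ‖y‖ ^ 2 ∂ν) := by
  obtain ⟨_, h1, h2⟩ := hπ
  subst h1 h2
  have e : ∀ k : ℕ, ∫ x, ‖x‖ ^ k ∂(π.map Prod.fst) = ∫ p, ‖p.1‖ ^ k ∂π := fun k =>
    integral_map (by fun_prop) (by fun_prop)
  have e' : ∀ k : ℕ, ∫ x, ‖x‖ ^ k ∂(π.map Prod.snd) = ∫ p, ‖p.2‖ ^ k ∂π := fun k =>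
    integral_map (by fun_prop) (by fun_prop)
  have i1 : Integrable (fun p => ‖p.1‖ ^ 4) π := h4μ.comp_measurable measurable_fst
  have i2 : Integrable (fun p => ‖p.2‖ ^ 4) π := h4ν.comp_measurable measurable_snd
  have hle : ∀ a b : ℝ, a ^ 2 * b ^ 2 ≤ a ^ 4 + b ^ 4 := fun a b => by
    nlinarith [sq_nonneg (a ^ 2 - b ^ 2), sq_nonneg (a ^ 2 + b ^ 2)]
  have iq : Integrable (fun p => ‖p.1‖ ^ 2 * ‖p.2‖ ^ 2) π := by
    refine (i1.add i2).mono' (by fun_prop) (ae_of_all _ fun p => ?_)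
    rw [Real.norm_of_nonneg (by positivity)]
    exact hle _ _
  have s1 : MemLp (fun p => ‖p.1‖) 2 π := by
    rw [memLp_two_iff_integrable_sq (by fun_prop)]
    refine (i1.add (integrable_const (1 : ℝ))).mono' (by fun_prop) (ae_of_all _ fun p => ?_)
    rw [Real.norm_of_nonneg (by positivity)]
    simpa using hle ‖p.1‖ 1
  have s2 : MemLp (fun p => ‖p.2‖) 2 π := by
    rw [memLp_two_iff_integrable_sq (by fun_prop)]
    refine (i2.add (integrable_const (1 : ℝ))).mono' (by fun_prop) (ae_of_all _ fun p => ?_)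
    rw [Real.norm_of_nonneg (by positivity)]
    simpa using hle ‖p.2‖ 1
  have ixy : Integrable (fun p => ‖p.1‖ * ‖p.2‖) π := s1.integrable_mul s2
  have hb : ∀ i j (p : EuclideanSpace ℝ (Fin dx) × EuclideanSpace ℝ (Fin dy)),
      ‖p.1 i * p.2 j‖ ≤ ‖p.1‖ * ‖p.2‖ := fun i j p => by
    rw [norm_mul]
    exact mul_le_mul (PiLp.norm_apply_le _ _) (PiLp.norm_apply_le _ _) (norm_nonneg _)
      (norm_nonneg _)
  refine ⟨iq, fun i j => ixy.mono' (by fun_prop) (ae_of_all _ (hb i j)), ?_, fun i j => ?_⟩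
  · rw [integral_const_mul, e, e', ← integral_add i1 i2]
    have := integral_mono iq (i1.add i2) fun p => hle ‖p.1‖ ‖p.2‖
    simp only [Pi.add_apply] at this
    linarith
  · have hc := integral_mul_le_Lp_mul_Lq_of_nonneg (μ := π) Real.HolderConjugate.two_two
      (ae_of_all _ fun p => norm_nonneg p.1) (ae_of_all _ fun p => norm_nonneg p.2)
      (by simpa using s1) (by simpa using s2)
    simp only [Real.rpow_two, ← Real.sqrt_eq_rpow] at hc
    rw [e, e', Real.sqrt_mul (integral_nonneg fun p => by positivity)]
    exact (norm_integral_le_of_norm_le ixy (ae_of_all _ (hb i j))).trans hc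

/-- **Entropic GW duality:** for `ε > 0`,
`S²_ε(μ,ν) = inf_{A ∈ ℝ^{d_x×d_y}} [32‖A‖_F² + OT_{A,ε}(μ,ν)]`, and the infimum is attained
at a matrix with all entries in `[−M_{μ,ν}/2, M_{μ,ν}/2]`, `M_{μ,ν} = √(M₂(μ)M₂(ν))`. -/
theorem egw_duality (dx dy : ℕ) (ε : ℝ) (hε : 0 < ε)
    (μ : Measure (EuclideanSpace ℝ (Fin dx))) (ν : Measure (EuclideanSpace ℝ (Fin dy)))
    [IsProbabilityMeasure μ] [IsProbabilityMeasure ν]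
    (h4μ : Integrable (fun x => ‖x‖ ^ 4) μ) (h4ν : Integrable (fun y => ‖y‖ ^ 4) ν) :
    (S2Eps ε μ ν
      = ⨅ A : Matrix (Fin dx) (Fin dy) ℝ,
          (32 * ∑ i : Fin dx, ∑ j : Fin dy, (A i j) ^ 2 + OTAEps A ε μ ν)) ∧
    ∃ A : Matrix (Fin dx) (Fin dy) ℝ,
      (∀ i j, |A i j| ≤ Real.sqrt ((∫ x, ‖x‖ ^ 2 ∂μ) * ∫ y, ‖y‖ ^ 2 ∂ν) / 2) ∧
      32 * ∑ i : Fin dx, ∑ j : Fin dy, (A i j) ^ 2 + OTAEps A ε μ ν = S2Eps ε μ ν := by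
  let ι := {π : Measure (EuclideanSpace ℝ (Fin dx) × EuclideanSpace ℝ (Fin dy)) //
    π ∈ Couplings μ ν ∧ entTerm ε π (μ.prod ν) ≠ ⊤}
  have : Nonempty ι := ⟨⟨μ.prod ν, ⟨inferInstance, by simp, by simp⟩, entTerm_self ε _⟩⟩
  let a : ι → ℝ := fun π =>
    (∫ p, -4 * (‖p.1‖ ^ 2 * ‖p.2‖ ^ 2) ∂π.1) + (entTerm ε π.1 (μ.prod ν)).toReal
  let m : ι → Fin dx × Fin dy → ℝ := fun π k => ∫ p, p.1 k.1 * p.2 k.2 ∂π.1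
  have hS : S2Eps ε μ ν = ⨅ π, (a π - 8 * ∑ k, m π k ^ 2) := by
    rw [S2Eps, iInf]
    congr 1
    ext v
    constructor
    · rintro ⟨π, hπ, hf, rfl⟩
      refine ⟨⟨π, hπ, hf⟩, ?_⟩
      simp only [a, m, S2Cost, Fintype.sum_prod_type]
      ring
    · rintro ⟨⟨π, hπ, hf⟩, rfl⟩
      refine ⟨π, hπ, hf, ?_⟩
      simp only [a, m, S2Cost, Fintype.sum_prod_type]
      ring
  have hcost : ∀ (A : Matrix (Fin dx) (Fin dy) ℝ) (π : ι),
      (∫ p, costA A p.1 p.2 ∂π.1) + (entTerm ε π.1 (μ.prod ν)).toReal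
        = a π - 32 * ∑ k, A k.1 k.2 * m π k := by
    intro A π
    obtain ⟨iq, im, -, -⟩ := coupling_estimates h4μ h4ν π.2.1
    have im' : ∀ i j, Integrable (fun p => p.1 i * A i j * p.2 j) π.1 := fun i j =>
      ((im i j).const_mul (A i j)).congr (ae_of_all _ fun p => by ring)
    have hs : (∫ p, ∑ i, ∑ j, p.1 i * A i j * p.2 j ∂π.1) = ∑ k, A k.1 k.2 * m π k := by
      rw [integral_finsetSum _ fun i _ => integrable_finsetSum _ fun j _ => im' i j,
        Fintype.sum_prod_type]
      refine Finset.sum_congr rfl fun i _ => ?_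
      rw [integral_finsetSum _ fun j _ => im' i j]
      refine Finset.sum_congr rfl fun j _ => ?_
      simp only [m]
      rw [← integral_const_mul]
      exact integral_congr_ae (ae_of_all _ fun p => by ring)
    simp only [costA]
    rw [integral_sub (iq.const_mul _) ((integrable_finsetSum _ fun i _ =>
      integrable_finsetSum _ fun j _ => im' i j).const_mul _), integral_const_mul 32, hs]
    simp only [a]
    ring
  have hO : ∀ A : Matrix (Fin dx) (Fin dy) ℝ,
      OTAEps A ε μ ν = ⨅ π, (a π - 32 * ∑ k, A k.1 k.2 * m π k) := by
    intro A
    rw [OTAEps, iInf]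
    congr 1
    ext v
    constructor
    · rintro ⟨π, hπ, hf, rfl⟩
      exact ⟨⟨π, hπ, hf⟩, (hcost A _).symm⟩
    · rintro ⟨⟨π, hπ, hf⟩, rfl⟩
      exact ⟨π, hπ, hf, (hcost A ⟨π, hπ, hf⟩).symm⟩
  obtain ⟨lower, A, hA, hAeq⟩ := abstract_duality a m
    (-4 * ((∫ x, ‖x‖ ^ 4 ∂μ) + ∫ y, ‖y‖ ^ 4 ∂ν))
    (Real.sqrt ((∫ x, ‖x‖ ^ 2 ∂μ) * ∫ y, ‖y‖ ^ 2 ∂ν))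
    (fun π => (coupling_estimates h4μ h4ν π.2.1).2.2.1.trans
      (le_add_of_nonneg_right ENNReal.toReal_nonneg))
    (fun π k => (coupling_estimates h4μ h4ν π.2.1).2.2.2 k.1 k.2)
  have lower' : ∀ B : Matrix (Fin dx) (Fin dy) ℝ,
      S2Eps ε μ ν ≤ 32 * ∑ i, ∑ j, B i j ^ 2 + OTAEps B ε μ ν := by
    intro B
    have := lower fun k => B k.1 k.2
    rwa [← hS, ← hO B, Fintype.sum_prod_type] at this
  have heq : 32 * ∑ i, ∑ j, (Matrix.of fun i j => A (i, j)) i j ^ 2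
      + OTAEps (Matrix.of fun i j => A (i, j)) ε μ ν = S2Eps ε μ ν := by
    rw [hO, hS, ← hAeq, Fintype.sum_prod_type]
    rfl
  refine ⟨le_antisymm (le_ciInf lower') ?_, _, fun i j => hA (i, j), heq⟩
  exact (ciInf_le ⟨_, Set.forall_mem_range.2 lower'⟩ _).trans_eq heq
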